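/- The simplicial complex C_25 obtained by gluing 25 disjoint copies of X̄ along A is not partitionable. -/

import Mathlib

/-- The facets (maximal faces) of a collection of finite sets. -/
def facets {V : Type*} [DecidableEq V] (Φ : Finset (Finset V)) : Finset (Finset V) :=
  Φ.filter (fun F => ∀ G ∈ Φ, F ⊆ G → F = G)

/-- A (relative or absolute) simplicial complex `Φ` is partitionable if it decomposes as a
disjoint union of Boolean intervals `[R F, F]`, one for each facet `F`. -/
def Partitionable {V : Type*} [DecidableEq V] (Φ : Finset (Finset V)) : Prop :=
  ∃ R : Finset V → Finset V,
    (∀ F ∈ facets Φ, R F ⊆ F) ∧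
    (∀ F ∈ facets Φ, ∀ σ : Finset V, R F ⊆ σ → σ ⊆ F → σ ∈ Φ) ∧
    (∀ σ ∈ Φ, ∃! F, F ∈ facets Φ ∧ R F ⊆ σ ∧ σ ⊆ F)

/-- The simplicial complex generated by a list of facets. -/
def gen (L : List (Finset ℕ)) : Finset (Finset ℕ) :=
  L.toFinset.biUnion Finset.powerset

/-- The simplicial complex `X̄` on vertices `{0,…,9}` with fourteen facets. -/
def Xbar : Finset (Finset ℕ) :=
  gen [{1,2,4,9},{1,2,6,9},{1,5,6,9},{1,5,8,9},{1,4,8,9},{1,4,5,8},{1,4,5,7},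
       {4,5,7,8},{1,2,5,6},{0,1,2,5},{0,2,5,6},{0,1,2,3},{1,2,3,4},{1,3,4,7}]

/-- The map on vertices defining the `i`-th copy of `X̄` in the glued complex `C_N`:
vertices of `A` (i.e. those in `{0,2,3,4,6,7,8}`) are fixed, and each vertex
`v ∈ {1,5,9}` is sent to `(i, v)`. -/
def glueVertex (i : ℕ) (v : ℕ) : ℕ ⊕ (ℕ × ℕ) :=
  if v = 1 ∨ v = 5 ∨ v = 9 then Sum.inr (i, v) else Sum.inl v

/-- The image `φ_i(σ)` of a face `σ` of `X̄` in the `i`-th copy of `X̄`. -/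
def phi (i : ℕ) (σ : Finset ℕ) : Finset (ℕ ⊕ (ℕ × ℕ)) :=
  σ.image (glueVertex i)

/-- The simplicial complex `C_N` obtained by gluing `N` disjoint copies of `X̄` along `A`. -/
def C (N : ℕ) : Finset (Finset (ℕ ⊕ (ℕ × ℕ))) :=
  (Finset.Icc 1 N).biUnion (fun i => Xbar.image (phi i))

/-!
Fix a partitioning of a complex `Δ` and consider disjoint up-closed subsets `Γ₁, …, Γₙ` of `Δ`.
If the interval of every facet of `Γᵢ` starts in `Γᵢ`, then these intervals partition `Γᵢ`.
Otherwise some facet of `Γᵢ` has an interval starting outside `Γᵢ`, hence outside every `Γⱼ`.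
Distinct intervals start at distinct faces, so at most `|Δ \ ⋃ Γᵢ|` of the `Γᵢ` can fail to be
partitionable.

In `C_N` the copies of the relative complex `(X̄, A)` are such up-closed subsets, and only the 24
faces of `A` are left over. Finally, `(X̄, A)` is not partitionable: a partitioning would have a
facet containing `125` whose interval contains the edge `15` and, by the symmetry of `X̄`
exchanging `2` and `4`, also a facet containing `145` whose interval contains `15`. They would be
the same facet, but no facet contains `1245`.
-/

section Partitionings

variable {V W : Type*} [DecidableEq V] [DecidableEq W]

theorem mem_facets {Φ : Finset (Finset V)} {F : Finset V} :
    F ∈ facets Φ ↔ F ∈ Φ ∧ ∀ G ∈ Φ, F ⊆ G → F = G :=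
  Finset.mem_filter

theorem mem_facets_iff_of_isRelUpperSet {Γ Δ : Finset (Finset V)}
    (hΓ : IsRelUpperSet (Γ : Set (Finset V)) (· ∈ Δ)) {F : Finset V} :
    F ∈ facets Γ ↔ F ∈ facets Δ ∧ F ∈ Γ := by
  rw [mem_facets, mem_facets]
  constructor
  · rintro ⟨hF, hmax⟩
    exact ⟨⟨(hΓ hF).1, fun G hG hFG => hmax G ((hΓ hF).2 hFG hG) hFG⟩, hF⟩
  · rintro ⟨⟨-, hmax⟩, hF⟩
    exact ⟨hF, fun G hG => hmax G (hΓ hG).1⟩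

theorem image_mem_facets_image_iff {f : V → W} (hf : f.Injective) {Φ : Finset (Finset V)}
    {F : Finset V} : F.image f ∈ facets (Φ.image (Finset.image f)) ↔ F ∈ facets Φ := by
  simp only [mem_facets, (Finset.image_injective hf).mem_finset_image, Finset.forall_mem_image,
    Finset.image_subset_image_iff hf, (Finset.image_injective hf).eq_iff]

/-- `R` is a partitioning of `Φ`: the interval of a facet `F` is `[R F, F]`, so that `R F` is the
restriction face of `F`. Values of `R` at other sets are irrelevant. -/
structure IsPartitioning (Φ : Finset (Finset V)) (R : Finset V → Finset V) : Prop where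
  subset : ∀ F ∈ facets Φ, R F ⊆ F
  mem : ∀ F ∈ facets Φ, ∀ σ, R F ⊆ σ → σ ⊆ F → σ ∈ Φ
  existsUnique : ∀ σ ∈ Φ, ∃! F, F ∈ facets Φ ∧ R F ⊆ σ ∧ σ ⊆ F

theorem partitionable_iff {Φ : Finset (Finset V)} :
    Partitionable Φ ↔ ∃ R, IsPartitioning Φ R :=
  exists_congr fun _ => ⟨fun ⟨h₁, h₂, h₃⟩ => ⟨h₁, h₂, h₃⟩, fun ⟨h₁, h₂, h₃⟩ => ⟨h₁, h₂, h₃⟩⟩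

namespace IsPartitioning

variable {Φ Γ Δ : Finset (Finset V)} {R : Finset V → Finset V} {σ F G : Finset V}

theorem restriction_mem (hR : IsPartitioning Φ R) (hF : F ∈ facets Φ) : R F ∈ Φ :=
  hR.mem F hF _ subset_rfl (hR.subset F hF)

theorem eq_of_mem_interval (hR : IsPartitioning Φ R) (hF : F ∈ facets Φ) (hG : G ∈ facets Φ)
    (hRF : R F ⊆ σ) (hσF : σ ⊆ F) (hRG : R G ⊆ σ) (hσG : σ ⊆ G) : F = G :=
  (hR.existsUnique σ (hR.mem F hF σ hRF hσF)).unique ⟨hF, hRF, hσF⟩ ⟨hG, hRG, hσG⟩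

theorem injOn (hR : IsPartitioning Φ R) : Set.InjOn R (facets Φ) := fun F hF G hG h =>
  hR.eq_of_mem_interval hF hG subset_rfl (hR.subset F hF) h.ge (h ▸ hR.subset G hG)

theorem restriction_subset_of_unique_facet (hR : IsPartitioning Φ R) (hσ : σ ∈ Φ)
    (hF : ∀ G ∈ facets Φ, σ ⊆ G → G = F) : R F ⊆ σ := by
  obtain ⟨G, hG, hRG, hσG⟩ := (hR.existsUnique σ hσ).exists
  exact hF G hG hσG ▸ hRG

theorem of_isRelUpperSet (hR : IsPartitioning Δ R)
    (hΓ : IsRelUpperSet (Γ : Set (Finset V)) (· ∈ Δ)) (hmem : ∀ F ∈ facets Γ, R F ∈ Γ) :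
    IsPartitioning Γ R where
  subset F hF := hR.subset F ((mem_facets_iff_of_isRelUpperSet hΓ).mp hF).1
  mem F hF σ hRσ hσF :=
    (hΓ (hmem F hF)).2 hRσ (hR.mem F ((mem_facets_iff_of_isRelUpperSet hΓ).mp hF).1 σ hRσ hσF)
  existsUnique σ hσ := by
    obtain ⟨F, ⟨hF, hRσ, hσF⟩, huniq⟩ := hR.existsUnique σ (hΓ hσ).1
    have hFΓ : F ∈ Γ := (hΓ hσ).2 hσF (mem_facets.mp hF).1
    refine ⟨F, ⟨(mem_facets_iff_of_isRelUpperSet hΓ).mpr ⟨hF, hFΓ⟩, hRσ, hσF⟩, ?_⟩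
    rintro G ⟨hG, hG'⟩
    exact huniq G ⟨((mem_facets_iff_of_isRelUpperSet hΓ).mp hG).1, hG'⟩

theorem exists_of_image {f : V → W} (hf : f.Injective) {R : Finset W → Finset W}
    (hR : IsPartitioning (Φ.image (Finset.image f)) R) :
    ∃ S, IsPartitioning Φ S ∧ ∀ F ∈ facets Φ, (S F).image f = R (F.image f) := by
  have hfacet {F : Finset V} := image_mem_facets_image_iff hf (Φ := Φ) (F := F)
  have hsub {σ τ : Finset V} := Finset.image_subset_image_iff hf (s := σ) (t := τ)
  have hpull : ∀ F ∈ facets Φ, ∃ σ : Finset V, σ.image f = R (F.image f) := fun F hF =>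
    (Finset.subset_image_iff.mp (hR.subset _ (hfacet.mpr hF))).imp fun _ h => h.2
  choose! S hS using hpull
  refine ⟨S, ⟨fun F hF => ?_, fun F hF σ hSσ hσF => ?_, fun σ hσ => ?_⟩, hS⟩
  · exact hsub.mp (hS F hF ▸ hR.subset _ (hfacet.mpr hF))
  · exact (Finset.image_injective hf).mem_finset_image.mp
      (hR.mem _ (hfacet.mpr hF) _ (hS F hF ▸ hsub.mpr hSσ) (hsub.mpr hσF))
  · obtain ⟨F', ⟨hF', hRσ, hσF⟩, huniq⟩ :=
      hR.existsUnique (σ.image f) (Finset.mem_image_of_mem _ hσ)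
    obtain ⟨F, -, rfl⟩ := Finset.mem_image.mp (mem_facets.mp hF').1
    have hF := hfacet.mp hF'
    refine ⟨F, ⟨hF, hsub.mp (hS F hF ▸ hRσ), hsub.mp hσF⟩, fun G ⟨hG, hSσ, hσG⟩ => ?_⟩
    exact Finset.image_injective hf
      (huniq _ ⟨hfacet.mpr hG, hS G hG ▸ hsub.mpr hSσ, hsub.mpr hσG⟩)

end IsPartitioning

theorem Partitionable.of_image {f : V → W} (hf : f.Injective) {Φ : Finset (Finset V)}
    (h : Partitionable (Φ.image (Finset.image f))) : Partitionable Φ := by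
  obtain ⟨R, hR⟩ := partitionable_iff.mp h
  exact partitionable_iff.mpr ((hR.exists_of_image hf).imp fun _ hS => hS.1)

theorem Partitionable.exists_partitionable_of_card_lt {ι : Type*} {Δ : Finset (Finset V)}
    {s : Finset ι} {Γ : ι → Finset (Finset V)} (hΔ : Partitionable Δ)
    (hΓ : ∀ i ∈ s, IsRelUpperSet (Γ i : Set (Finset V)) (· ∈ Δ))
    (hdisj : (s : Set ι).PairwiseDisjoint Γ) (hcard : (Δ \ s.biUnion Γ).card < s.card) :
    ∃ i ∈ s, Partitionable (Γ i) := by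
  obtain ⟨R, hR⟩ := partitionable_iff.mp hΔ
  by_contra! hnot
  have hbad : ∀ i ∈ s, ∃ F ∈ facets (Γ i), R F ∉ Γ i := by
    intro i hi
    by_contra! hmem
    exact hnot i hi (partitionable_iff.mpr ⟨R, hR.of_isRelUpperSet (hΓ i hi) hmem⟩)
  choose! F hF hRF using hbad
  have hFΓ : ∀ i ∈ s, F i ∈ Γ i := fun i hi => (mem_facets.mp (hF i hi)).1
  have hFΔ : ∀ i ∈ s, F i ∈ facets Δ := fun i hi =>
    ((mem_facets_iff_of_isRelUpperSet (hΓ i hi)).mp (hF i hi)).1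
  have hmaps : ∀ i ∈ s, R (F i) ∈ Δ \ s.biUnion Γ := by
    refine fun i hi => Finset.mem_sdiff.mpr ⟨hR.restriction_mem (hFΔ i hi), fun hmem => ?_⟩
    obtain ⟨j, hj, hRj⟩ := Finset.mem_biUnion.mp hmem
    have hFj : F i ∈ Γ j := (hΓ j hj hRj).2 (hR.subset _ (hFΔ i hi)) (hΓ i hi (hFΓ i hi)).1
    obtain rfl := hdisj.elim_finset hi hj (F i) (hFΓ i hi) hFj
    exact hRF i hi hRj
  obtain ⟨i, hi, j, hj, hij, heq⟩ := Finset.exists_ne_map_eq_of_card_lt_of_maps_to hcard hmaps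
  have hFij : F i = F j := hR.injOn (hFΔ i hi) (hFΔ j hj) heq
  exact hij (hdisj.elim_finset hi hj (F i) (hFΓ i hi) (hFij ▸ hFΓ j hj))

end Partitionings

theorem mem_gen {L : List (Finset ℕ)} {σ : Finset ℕ} : σ ∈ gen L ↔ ∃ F ∈ L, σ ⊆ F := by
  simp only [gen, Finset.mem_biUnion, List.mem_toFinset, Finset.mem_powerset]

theorem mem_gen_iff_exists_facet {L : List (Finset ℕ)} {σ : Finset ℕ} :
    σ ∈ gen L ↔ ∃ F ∈ facets (gen L), σ ⊆ F := by
  constructor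
  · intro hσ
    obtain ⟨F, hσF, hF⟩ := (gen L).exists_le_maximal hσ
    exact ⟨F, mem_facets.mpr ⟨hF.prop, fun G hG hFG => hF.eq_of_le hG hFG⟩, hσF⟩
  · rintro ⟨F, hF, hσF⟩
    obtain ⟨G, hG, hFG⟩ := mem_gen.mp (mem_facets.mp hF).1
    exact mem_gen.mpr ⟨G, hG, hσF.trans hFG⟩

theorem facets_gen_of_antichain {L : List (Finset ℕ)}
    (hL : ∀ F ∈ L, ∀ G ∈ L, F ⊆ G → F = G) : facets (gen L) = L.toFinset := by
  ext F
  rw [mem_facets, mem_gen, List.mem_toFinset]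
  constructor
  · rintro ⟨⟨G, hG, hFG⟩, hmax⟩
    exact hmax G (mem_gen.mpr ⟨G, hG, subset_rfl⟩) hFG ▸ hG
  · refine fun hF => ⟨⟨F, hF, subset_rfl⟩, fun G hG hFG => ?_⟩
    obtain ⟨H, hH, hGH⟩ := mem_gen.mp hG
    exact hFG.antisymm (hL F hF H hH (hFG.trans hGH) ▸ hGH)

theorem facets_Xbar : facets Xbar =
    {{1,2,4,9},{1,2,6,9},{1,5,6,9},{1,5,8,9},{1,4,8,9},{1,4,5,8},{1,4,5,7},
     {4,5,7,8},{1,2,5,6},{0,1,2,5},{0,2,5,6},{0,1,2,3},{1,2,3,4},{1,3,4,7}} := by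
  rw [Xbar, facets_gen_of_antichain (by decide +kernel)]
  simp only [List.toFinset_cons, List.toFinset_nil, insert_empty_eq]

/-- The subcomplex `A` of `X̄` along which the copies are glued. -/
def A : Finset (Finset ℕ) :=
  gen [{0,2,6},{0,2,3},{2,3,4},{3,4,7},{4,7,8}]

/-- The vertices of `X̄` outside `A`, of which each copy in `C_N` has its own. -/
def privateVertices : Finset ℕ := {1, 5, 9}

theorem facets_A : facets A = {{0,2,6},{0,2,3},{2,3,4},{3,4,7},{4,7,8}} := by
  rw [A, facets_gen_of_antichain (by decide +kernel)]
  simp only [List.toFinset_cons, List.toFinset_nil, insert_empty_eq]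

theorem card_A : A.card = 24 := by decide +kernel

theorem mem_A {σ : Finset ℕ} : σ ∈ A ↔ σ ∈ Xbar ∧ Disjoint σ privateVertices := by
  have hgen : ∀ B ∈ facets A, (∃ F ∈ facets Xbar, B ⊆ F) ∧ Disjoint B privateVertices := by
    rw [facets_A, facets_Xbar]; decide +kernel
  have hsdiff : ∀ F ∈ facets Xbar, ∃ B ∈ facets A, F \ privateVertices ⊆ B := by
    rw [facets_A, facets_Xbar]; decide +kernel
  rw [A, Xbar, mem_gen_iff_exists_facet, mem_gen_iff_exists_facet, ← A, ← Xbar]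
  constructor
  · rintro ⟨B, hB, hσB⟩
    obtain ⟨⟨F, hF, hBF⟩, hd⟩ := hgen B hB
    exact ⟨⟨F, hF, hσB.trans hBF⟩, hd.mono_left hσB⟩
  · rintro ⟨⟨F, hF, hσF⟩, hd⟩
    obtain ⟨B, hB, hFB⟩ := hsdiff F hF
    exact ⟨B, hB, (Finset.subset_sdiff.mpr ⟨hσF, hd⟩).trans hFB⟩

theorem mem_Xbar_sdiff_A {σ : Finset ℕ} :
    σ ∈ Xbar \ A ↔ σ ∈ Xbar ∧ ¬ Disjoint σ privateVertices := by
  rw [Finset.mem_sdiff, mem_A, not_and]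
  exact and_congr_right imp_iff_right

theorem mem_Xbar_sdiff_A_iff_exists_facet {σ : Finset ℕ} :
    σ ∈ Xbar \ A ↔ (∃ F ∈ facets Xbar, σ ⊆ F) ∧ ¬ Disjoint σ privateVertices := by
  rw [mem_Xbar_sdiff_A, Xbar, mem_gen_iff_exists_facet]

theorem isRelUpperSet_Xbar_sdiff_A :
    IsRelUpperSet ((Xbar \ A : Finset _) : Set (Finset ℕ)) (· ∈ Xbar) := by
  intro σ hσ
  obtain ⟨hσX, hσp⟩ := mem_Xbar_sdiff_A.mp hσ
  exact ⟨hσX, fun τ hστ hτ => mem_Xbar_sdiff_A.mpr ⟨hτ, fun hd => hσp (hd.mono_left hστ)⟩⟩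

theorem facets_Xbar_sdiff_A : facets (Xbar \ A) = facets Xbar := by
  have hmeet : ∀ F ∈ facets Xbar, ¬ Disjoint F privateVertices := by
    rw [facets_Xbar]; decide +kernel
  ext F
  rw [mem_facets_iff_of_isRelUpperSet isRelUpperSet_Xbar_sdiff_A, and_iff_left_iff_imp]
  exact fun hF => mem_Xbar_sdiff_A.mpr ⟨(mem_facets.mp hF).1, hmeet F hF⟩

/-- The automorphism of `(X̄, A)` which exchanges `0 ↔ 7`, `2 ↔ 4` and `6 ↔ 8`. -/
def reflection : Equiv.Perm ℕ :=
  Equiv.swap 0 7 * Equiv.swap 2 4 * Equiv.swap 6 8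

theorem image_reflection_Xbar_sdiff_A :
    (Xbar \ A).image (Finset.image reflection) = Xbar \ A := by
  have hfacet : ∀ F ∈ facets Xbar, F.image reflection ∈ facets Xbar := by
    rw [facets_Xbar]; decide +kernel
  have hprivate : privateVertices.image reflection = privateVertices := by decide
  refine Finset.eq_of_subset_of_card_le (Finset.image_subset_iff.mpr fun σ hσ => ?_)
    (Finset.card_image_of_injective _ (Finset.image_injective reflection.injective)).ge
  obtain ⟨⟨F, hF, hσF⟩, hσp⟩ := mem_Xbar_sdiff_A_iff_exists_facet.mp hσ
  refine mem_Xbar_sdiff_A_iff_exists_facet.mpr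
    ⟨⟨_, hfacet F hF, Finset.image_subset_image hσF⟩, ?_⟩
  rwa [← hprivate, Finset.disjoint_image reflection.injective]

section Relative

variable {R : Finset ℕ → Finset ℕ}

theorem restriction_1256_subset (hR : IsPartitioning (Xbar \ A) R) : R {1,2,5,6} ⊆ {1,6} := by
  have h269 : R {1,2,6,9} ⊆ {2,6,9} := hR.restriction_subset_of_unique_facet
    (by rw [mem_Xbar_sdiff_A_iff_exists_facet, facets_Xbar]; decide +kernel)
    (by rw [facets_Xbar_sdiff_A, facets_Xbar]; decide +kernel)
  have h569 : R {1,5,6,9} ⊆ {5,6,9} := hR.restriction_subset_of_unique_facet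
    (by rw [mem_Xbar_sdiff_A_iff_exists_facet, facets_Xbar]; decide +kernel)
    (by rw [facets_Xbar_sdiff_A, facets_Xbar]; decide +kernel)
  have hfacet : ∀ F ∈ facets (Xbar \ A), {1,6} ⊆ F →
      F = {1,2,6,9} ∨ F = {1,5,6,9} ∨ F = {1,2,5,6} := by
    rw [facets_Xbar_sdiff_A, facets_Xbar]; decide +kernel
  have h6 : {6} ∉ Xbar \ A := by
    rw [mem_Xbar_sdiff_A_iff_exists_facet, facets_Xbar]; decide +kernel
  have h16 : {1,6} ∈ Xbar \ A := by
    rw [mem_Xbar_sdiff_A_iff_exists_facet, facets_Xbar]; decide +kernel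
  -- The intervals of `1269` and `1569` miss `16`: they contain `269` and `569` respectively, so
  -- they would otherwise contain the intersection `6`, a face of `A`.
  obtain ⟨F, hF, hRF, h16F⟩ := (hR.existsUnique {1,6} h16).exists
  obtain rfl | rfl | rfl := hfacet F hF h16F
  · exact (h6 (hR.mem _ hF ({1,6} ∩ {2,6,9}) (Finset.subset_inter hRF h269) (by decide))).elim
  · exact (h6 (hR.mem _ hF ({1,6} ∩ {5,6,9}) (Finset.subset_inter hRF h569) (by decide))).elim
  · exact hRF

theorem exists_facet_125_subset_restriction_subset_15 (hR : IsPartitioning (Xbar \ A) R) :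
    ∃ F ∈ facets (Xbar \ A), {1,2,5} ⊆ F ∧ R F ⊆ {1,5} := by
  have h015 : R {0,1,2,5} ⊆ {0,1,5} := hR.restriction_subset_of_unique_facet
    (by rw [mem_Xbar_sdiff_A_iff_exists_facet, facets_Xbar]; decide +kernel)
    (by rw [facets_Xbar_sdiff_A, facets_Xbar]; decide +kernel)
  have hfacet : ∀ F ∈ facets (Xbar \ A), {1,2,5} ⊆ F → F = {1,2,5,6} ∨ F = {0,1,2,5} := by
    rw [facets_Xbar_sdiff_A, facets_Xbar]; decide +kernel
  have h125 : {1,2,5} ∈ Xbar \ A := by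
    rw [mem_Xbar_sdiff_A_iff_exists_facet, facets_Xbar]; decide +kernel
  obtain ⟨F, hF, hRF, h125F⟩ := (hR.existsUnique {1,2,5} h125).exists
  refine ⟨F, hF, h125F, ?_⟩
  obtain rfl | rfl := hfacet F hF h125F
  · calc R {1,2,5,6} ⊆ {1,2,5} ∩ {1,6} := Finset.subset_inter hRF (restriction_1256_subset hR)
      _ ⊆ {1,5} := by decide
  · calc R {0,1,2,5} ⊆ {1,2,5} ∩ {0,1,5} := Finset.subset_inter hRF h015
      _ ⊆ {1,5} := by decide

theorem exists_facet_145_subset_restriction_subset_15 (hR : IsPartitioning (Xbar \ A) R) :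
    ∃ F ∈ facets (Xbar \ A), {1,4,5} ⊆ F ∧ R F ⊆ {1,5} := by
  have hR' : IsPartitioning ((Xbar \ A).image (Finset.image reflection)) R := by
    rwa [image_reflection_Xbar_sdiff_A]
  obtain ⟨S, hS, hSR⟩ := hR'.exists_of_image reflection.injective
  obtain ⟨F, hF, h125F, hSF⟩ := exists_facet_125_subset_restriction_subset_15 hS
  have h145 : Finset.image reflection {1,2,5} = {1,4,5} := by decide
  have h15 : Finset.image reflection {1,5} = {1,5} := by decide
  refine ⟨F.image reflection, ?_, ?_, ?_⟩
  · rw [← image_reflection_Xbar_sdiff_A]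
    exact (image_mem_facets_image_iff reflection.injective).mpr hF
  · calc {1,4,5} = Finset.image reflection {1,2,5} := h145.symm
      _ ⊆ F.image reflection := Finset.image_subset_image h125F
  · calc R (F.image reflection) = (S F).image reflection := (hSR F hF).symm
      _ ⊆ Finset.image reflection {1,5} := Finset.image_subset_image hSF
      _ = {1,5} := h15

theorem not_partitionable_Xbar_sdiff_A : ¬ Partitionable (Xbar \ A) := by
  intro h
  obtain ⟨R, hR⟩ := partitionable_iff.mp h
  obtain ⟨F, hF, h125F, hRF⟩ := exists_facet_125_subset_restriction_subset_15 hR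
  obtain ⟨G, hG, h145G, hRG⟩ := exists_facet_145_subset_restriction_subset_15 hR
  obtain rfl : F = G := hR.eq_of_mem_interval hF hG hRF (.trans (by decide) h125F) hRG
    (.trans (by decide) h145G)
  have hno : ∀ F ∈ facets (Xbar \ A), {1,2,5} ⊆ F → ¬ {1,4,5} ⊆ F := by
    rw [facets_Xbar_sdiff_A, facets_Xbar]; decide +kernel
  exact hno F hF h125F h145G

end Relative

section Gluing

variable {i j v w N : ℕ} {σ τ : Finset ℕ}

theorem glueVertex_of_mem (hv : v ∈ privateVertices) : glueVertex i v = .inr (i, v) :=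
  if_pos (by simpa [privateVertices] using hv)

theorem glueVertex_of_notMem (hv : v ∉ privateVertices) : glueVertex i v = .inl v :=
  if_neg (by simpa [privateVertices] using hv)

theorem glueVertex_injective (i : ℕ) : (glueVertex i).Injective := by
  intro v w h
  by_cases hv : v ∈ privateVertices <;> by_cases hw : w ∈ privateVertices <;>
    simp_all [glueVertex_of_mem, glueVertex_of_notMem]

theorem eq_of_glueVertex_eq (hv : v ∈ privateVertices) (h : glueVertex i v = glueVertex j w) :
    i = j := by
  by_cases hw : w ∈ privateVertices <;>
    simp_all [glueVertex_of_mem, glueVertex_of_notMem]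

theorem eq_of_phi_subset_phi (hσ : ¬ Disjoint σ privateVertices) (h : phi i σ ⊆ phi j τ) :
    i = j := by
  obtain ⟨v, hvσ, hv⟩ := Finset.not_disjoint_iff.mp hσ
  obtain ⟨w, -, hw⟩ := Finset.mem_image.mp (h (Finset.mem_image_of_mem _ hvσ))
  exact eq_of_glueVertex_eq hv hw.symm

theorem phi_eq_phi_of_disjoint (hσ : Disjoint σ privateVertices) (i j : ℕ) :
    phi i σ = phi j σ :=
  Finset.image_congr fun v hv => by
    have hv' := Finset.disjoint_left.mp hσ hv
    rw [glueVertex_of_notMem hv', glueVertex_of_notMem hv']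

theorem mem_C {ρ : Finset (ℕ ⊕ (ℕ × ℕ))} :
    ρ ∈ C N ↔ ∃ i ∈ Finset.Icc 1 N, ∃ σ ∈ Xbar, phi i σ = ρ := by
  simp only [C, Finset.mem_biUnion, Finset.mem_image]

theorem isRelUpperSet_image_phi (hi : i ∈ Finset.Icc 1 N) :
    IsRelUpperSet ((Xbar \ A).image (phi i) : Set (Finset (ℕ ⊕ (ℕ × ℕ)))) (· ∈ C N) := by
  intro ρ hρ
  obtain ⟨σ, hσ, rfl⟩ := Finset.mem_image.mp hρ
  obtain ⟨hσX, hup⟩ := isRelUpperSet_Xbar_sdiff_A hσ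
  refine ⟨mem_C.mpr ⟨i, hi, σ, hσX, rfl⟩, fun ρ' hle hρ' => ?_⟩
  obtain ⟨j, -, τ, hτ, rfl⟩ := mem_C.mp hρ'
  obtain rfl := eq_of_phi_subset_phi (mem_Xbar_sdiff_A.mp hσ).2 hle
  have hστ : σ ⊆ τ := (Finset.image_subset_image_iff (glueVertex_injective i)).mp hle
  exact Finset.mem_image_of_mem _ (hup hστ hτ)

theorem pairwiseDisjoint_image_phi (s : Set ℕ) :
    s.PairwiseDisjoint fun i => (Xbar \ A).image (phi i) := by
  refine fun i _ j _ hij => Finset.disjoint_left.mpr fun ρ hρi hρj => hij ?_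
  obtain ⟨σ, hσ, rfl⟩ := Finset.mem_image.mp hρi
  obtain ⟨τ, -, hτ⟩ := Finset.mem_image.mp hρj
  exact eq_of_phi_subset_phi (mem_Xbar_sdiff_A.mp hσ).2 hτ.ge

theorem card_C_sdiff_le (N : ℕ) :
    (C N \ (Finset.Icc 1 N).biUnion fun i => (Xbar \ A).image (phi i)).card ≤ A.card := by
  suffices hsub : C N \ (Finset.Icc 1 N).biUnion (fun i => (Xbar \ A).image (phi i)) ⊆
      A.image (phi 0) from (Finset.card_le_card hsub).trans Finset.card_image_le
  intro ρ hρ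
  obtain ⟨hρC, hρ'⟩ := Finset.mem_sdiff.mp hρ
  obtain ⟨i, hi, σ, hσ, rfl⟩ := mem_C.mp hρC
  have hσA : σ ∈ A := by
    by_contra hσA
    exact hρ' (Finset.mem_biUnion.mpr
      ⟨i, hi, Finset.mem_image_of_mem _ (Finset.mem_sdiff.mpr ⟨hσ, hσA⟩)⟩)
  exact Finset.mem_image.mpr ⟨σ, hσA, phi_eq_phi_of_disjoint (mem_A.mp hσA).2 0 i⟩

end Gluing

theorem C25_not_partitionable_general {N : ℕ} (hN : 24 < N) : ¬ Partitionable (C N) := by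
  intro h
  have hcard : (C N \ (Finset.Icc 1 N).biUnion fun i => (Xbar \ A).image (phi i)).card <
      (Finset.Icc 1 N).card :=
    calc _ ≤ A.card := card_C_sdiff_le N
      _ = 24 := card_A
      _ < N := hN
      _ = (Finset.Icc 1 N).card := by simp
  obtain ⟨i, -, hi⟩ := h.exists_partitionable_of_card_lt
    (fun i hi => isRelUpperSet_image_phi hi) (pairwiseDisjoint_image_phi _) hcard
  exact not_partitionable_Xbar_sdiff_A (hi.of_image (glueVertex_injective i))

/-- The simplicial complex `C_25` obtained by gluing 25 disjoint copies of `X̄` along `A`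
is not partitionable. -/
theorem C25_not_partitionable : ¬ Partitionable (C 25) :=
  C25_not_partitionable_general (by norm_num)
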